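/- arXiv:1705.07039 — 2 statements merged into one kernel-verified Lean document; each statement's English description precedes it below -/
import Mathlib

section
/- Let p, q be real numbers with pq > 0 and let A be a nonempty subset of X∖{0}. Then A is complete with respect to the metric α_p (every α_p-Cauchy sequence in A converges in (A, α_p)) if and only if A is complete with respect to the metric α_q. -/
/-- The `p`-angular distance `α_p[x,y] = ‖‖x‖^(p-1) • x - ‖y‖^(p-1) • y‖`. -/
noncomputable def alphaD {X : Type*} [NormedAddCommGroup X] [NormedSpace ℝ X]
    (p : ℝ) (x y : X) : ℝ :=
  ‖(‖x‖ ^ (p - 1)) • x - (‖y‖ ^ (p - 1)) • y‖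

/-- A set `A` is complete with respect to the metric `α_p`: every sequence in `A`
that is Cauchy with respect to `α_p` converges, with respect to `α_p`, to a point of `A`. -/
def AlphaComplete {X : Type*} [NormedAddCommGroup X] [NormedSpace ℝ X]
    (p : ℝ) (A : Set X) : Prop :=
  ∀ u : ℕ → X, (∀ n, u n ∈ A) →
    (∀ ε > (0 : ℝ), ∃ N : ℕ, ∀ m ≥ N, ∀ n ≥ N, alphaD p (u m) (u n) < ε) →
    ∃ a ∈ A, Filter.Tendsto (fun n => alphaD p (u n) a) Filter.atTop (nhds 0)

/-!
The map `x ↦ ‖x‖ ^ (p - 1) • x` pulls the norm distance back to `α_p`, and composing two such maps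
multiplies their exponents. Hence `α_p` and `α_q` differ by the map of exponent `q / p`, which is
positive exactly when `p * q` is. For a positive exponent the map is a homeomorphism, on the
completion as well as on the space, so it preserves Cauchy filters even though it is not uniformly
continuous in general. Thus `α_p` and `α_q` have the same Cauchy sequences and the same limits.
-/

open Filter Topology UniformSpace

theorem cauchy_map_of_continuous_completion {α β : Type*} [UniformSpace α] [UniformSpace β]
    {f : α → β} {g : Completion α → Completion β} (hg : Continuous g)
    (hgf : ∀ x : α, g x = f x) {F : Filter α} (hF : Cauchy F) : Cauchy (map f F) := by
  obtain ⟨l, hl⟩ :=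
    CompleteSpace.complete (hF.map (Completion.uniformContinuous_coe α))
  have : NeBot F := hF.1
  have hgl : Tendsto (fun x : α ↦ (f x : Completion β)) F (𝓝 (g l)) := by
    simpa only [Function.comp_def, hgf] using (hg.tendsto l).comp hl
  rw [← (Completion.isUniformInducing_coe β).cauchy_map_iff, map_map]
  exact hgl.cauchy_map

section RadialPow

variable {X : Type*} [NormedAddCommGroup X] [NormedSpace ℝ X]

/-- The radial power map, which keeps the direction of a nonzero vector and raises its norm to the
power `p`. It fixes the origin for every `p`, even where `0 ^ (p - 1)` is a junk value. -/
noncomputable def radialPow (p : ℝ) (x : X) : X :=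
  ‖x‖ ^ (p - 1) • x

theorem radialPow_zero_right (p : ℝ) : radialPow p (0 : X) = 0 :=
  smul_zero _

theorem radialPow_one (x : X) : radialPow 1 x = x := by
  simp [radialPow]

theorem norm_radialPow {p : ℝ} {x : X} (h : p ≠ 0 ∨ x ≠ 0) : ‖radialPow p x‖ = ‖x‖ ^ p := by
  have hmul : ‖x‖ ^ (p - 1) * ‖x‖ = ‖x‖ ^ (p - 1 + 1) := by
    rcases h with hp | hx
    · exact (Real.rpow_add_one' (norm_nonneg x) (by simpa using hp)).symm
    · exact (Real.rpow_add_one (norm_ne_zero_iff.mpr hx) _).symm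
  rw [radialPow, norm_smul, Real.norm_of_nonneg (by positivity), hmul, sub_add_cancel]

theorem radialPow_radialPow (r p : ℝ) (x : X) :
    radialPow r (radialPow p x) = radialPow (r * p) x := by
  rcases eq_or_ne x 0 with rfl | hx
  · simp only [radialPow_zero_right]
  have hx' : 0 < ‖x‖ := norm_pos_iff.mpr hx
  calc radialPow r (radialPow p x)
    _ = (‖x‖ ^ p) ^ (r - 1) • ‖x‖ ^ (p - 1) • x := by
      rw [radialPow, norm_radialPow (.inr hx), radialPow]
    _ = ‖x‖ ^ (p * (r - 1) + (p - 1)) • x := by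
      rw [smul_smul, ← Real.rpow_mul hx'.le, ← Real.rpow_add hx']
    _ = radialPow (r * p) x := by
      rw [radialPow]
      ring_nf

theorem continuous_radialPow {r : ℝ} (hr : 0 < r) : Continuous (radialPow r : X → X) := by
  refine continuous_iff_continuousAt.mpr fun x ↦ ?_
  rcases eq_or_ne x 0 with rfl | hx
  · have hnorm : Tendsto (fun y : X ↦ ‖y‖ ^ r) (𝓝 0) (𝓝 0) := by
      simpa [Real.zero_rpow hr.ne'] using
        (continuous_norm.rpow_const fun _ : X ↦ Or.inr hr.le).tendsto 0
    rw [ContinuousAt, radialPow_zero_right, tendsto_zero_iff_norm_tendsto_zero]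
    simpa only [norm_radialPow (.inl hr.ne')] using hnorm
  · exact (continuousAt_id.norm.rpow_const (.inl (norm_ne_zero_iff.mpr hx))).smul continuousAt_id

/-- The radial power map of positive exponent `r` as a self-homeomorphism of the space, with
inverse the radial power map of exponent `r⁻¹`. -/
noncomputable def radialPowHomeomorph (r : ℝ) (hr : 0 < r) : X ≃ₜ X where
  toFun := radialPow r
  invFun := radialPow r⁻¹
  left_inv x := by rw [radialPow_radialPow, inv_mul_cancel₀ hr.ne', radialPow_one]
  right_inv x := by rw [radialPow_radialPow, mul_inv_cancel₀ hr.ne', radialPow_one]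
  continuous_toFun := continuous_radialPow hr
  continuous_invFun := continuous_radialPow (inv_pos.mpr hr)

theorem tendsto_radialPow_iff {ι : Type*} {r : ℝ} (hr : 0 < r) {l : Filter ι} {v : ι → X} {a : X} :
    Tendsto (fun i ↦ radialPow r (v i)) l (𝓝 (radialPow r a)) ↔ Tendsto v l (𝓝 a) :=
  (radialPowHomeomorph r hr).isInducing.tendsto_nhds_iff.symm

theorem radialPow_coe_completion (r : ℝ) (x : X) :
    radialPow r (x : Completion X) = radialPow r x := by
  simp only [radialPow, Completion.norm_coe, Completion.coe_smul]

theorem cauchy_map_radialPow {r : ℝ} (hr : 0 < r) {F : Filter X} (hF : Cauchy F) :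
    Cauchy (map (radialPow r) F) :=
  cauchy_map_of_continuous_completion (continuous_radialPow hr) (radialPow_coe_completion r) hF

theorem cauchySeq_radialPow_iff {ι : Type*} [Preorder ι] {r : ℝ} (hr : 0 < r) {v : ι → X} :
    CauchySeq (fun i ↦ radialPow r (v i)) ↔ CauchySeq v := by
  refine ⟨fun h ↦ ?_, cauchy_map_radialPow hr⟩
  have hinv := cauchy_map_radialPow (inv_pos.mpr hr) h
  simpa only [CauchySeq, map_map, Function.comp_def, radialPow_radialPow,
    inv_mul_cancel₀ hr.ne', radialPow_one] using hinv

theorem alphaD_eq_dist_radialPow (p : ℝ) (x y : X) :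
    alphaD p x y = dist (radialPow p x) (radialPow p y) :=
  (dist_eq_norm _ _).symm

theorem alphaComplete_iff_radialPow {p : ℝ} {A : Set X} :
    AlphaComplete p A ↔ ∀ u : ℕ → X, (∀ n, u n ∈ A) → CauchySeq (fun n ↦ radialPow p (u n)) →
      ∃ a ∈ A, Tendsto (fun n ↦ radialPow p (u n)) atTop (𝓝 (radialPow p a)) := by
  have tendsto_iff (u : ℕ → X) (a : X) :
      Tendsto (fun n ↦ radialPow p (u n)) atTop (𝓝 (radialPow p a)) ↔
        Tendsto (fun n ↦ dist (radialPow p (u n)) (radialPow p a)) atTop (𝓝 0) :=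
    tendsto_iff_dist_tendsto_zero
  simp only [AlphaComplete, alphaD_eq_dist_radialPow, Metric.cauchySeq_iff, tendsto_iff]

end RadialPow

theorem stmt_6 {X : Type*} [NormedAddCommGroup X] [NormedSpace ℝ X]
    (p q : ℝ) (hpq : 0 < p * q) (A : Set X) (hA : A.Nonempty) (hA0 : ∀ a ∈ A, a ≠ 0) :
    AlphaComplete p A ↔ AlphaComplete q A := by
  have hp : p ≠ 0 := left_ne_zero_of_mul hpq.ne'
  have hr : 0 < q / p := by
    rw [← mul_div_mul_left q p hp]
    exact div_pos hpq (mul_self_pos.mpr hp)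
  have hcomp (x : X) : radialPow q x = radialPow (q / p) (radialPow p x) := by
    rw [radialPow_radialPow, div_mul_cancel₀ q hp]
  simp only [alphaComplete_iff_radialPow, hcomp, cauchySeq_radialPow_iff hr,
    tendsto_radialPow_iff hr]
end

section
/- Let X be a real inner product space with induced norm, let p be a real number and let x, y ∈ X be nonzero. Then α_p[x,y] = √( (‖x‖^(p+1) − ‖y‖^(p+1))(‖x‖^(p−1) − ‖y‖^(p−1)) + ‖x‖^(p−1)‖y‖^(p−1)‖x − y‖² ). In particular, for p = 0, α_0[x,y] = √( (‖x − y‖² − (‖x‖ − ‖y‖)²) / (‖x‖‖y‖) ). -/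
theorem alphaD_nonneg {X : Type*} [NormedAddCommGroup X] [NormedSpace ℝ X] (p : ℝ) (x y : X) :
    0 ≤ alphaD p x y :=
  norm_nonneg _

theorem rpow_add_one_eq_rpow_sub_one_mul_sq {t : ℝ} (ht : t ≠ 0) (p : ℝ) :
    t ^ (p + 1) = t ^ (p - 1) * t ^ 2 := by
  rw [← Real.rpow_add_natCast ht]
  congr 1
  push_cast
  ring

section InnerProductSpace

variable {X : Type*} [NormedAddCommGroup X] [InnerProductSpace ℝ X]

/- Both `‖a • x - b • y‖ ^ 2` and `a * b * ‖x - y‖ ^ 2` have cross term `-2 * a * b * ⟪x, y⟫`,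
so their difference depends on `x` and `y` only through the two norms. -/
theorem norm_smul_sub_smul_sq (a b : ℝ) (x y : X) :
    ‖a • x - b • y‖ ^ 2 =
      (a * ‖x‖ ^ 2 - b * ‖y‖ ^ 2) * (a - b) + a * b * ‖x - y‖ ^ 2 := by
  have expand_smul : ‖a • x - b • y‖ ^ 2 =
      a ^ 2 * ‖x‖ ^ 2 - 2 * (a * b * inner ℝ x y) + b ^ 2 * ‖y‖ ^ 2 := by
    rw [norm_sub_sq_real, norm_smul, norm_smul, mul_pow, mul_pow, Real.norm_eq_abs,
      Real.norm_eq_abs, sq_abs, sq_abs, real_inner_smul_left, real_inner_smul_right, mul_assoc a b]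
  rw [expand_smul, norm_sub_sq_real]
  ring

theorem alphaD_sq (p : ℝ) {x y : X} (hx : x ≠ 0) (hy : y ≠ 0) :
    alphaD p x y ^ 2 =
      (‖x‖ ^ (p + 1) - ‖y‖ ^ (p + 1)) * (‖x‖ ^ (p - 1) - ‖y‖ ^ (p - 1)) +
        ‖x‖ ^ (p - 1) * ‖y‖ ^ (p - 1) * ‖x - y‖ ^ 2 := by
  rw [rpow_add_one_eq_rpow_sub_one_mul_sq (norm_ne_zero_iff.mpr hx),
    rpow_add_one_eq_rpow_sub_one_mul_sq (norm_ne_zero_iff.mpr hy)]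
  exact norm_smul_sub_smul_sq _ _ x y

theorem alphaD_zero_sq {x y : X} (hx : x ≠ 0) (hy : y ≠ 0) :
    alphaD 0 x y ^ 2 = (‖x - y‖ ^ 2 - (‖x‖ - ‖y‖) ^ 2) / (‖x‖ * ‖y‖) := by
  have hx' : ‖x‖ ≠ 0 := norm_ne_zero_iff.mpr hx
  have hy' : ‖y‖ ≠ 0 := norm_ne_zero_iff.mpr hy
  calc
    alphaD 0 x y ^ 2 = (‖x‖ - ‖y‖) * (‖x‖⁻¹ - ‖y‖⁻¹) + ‖x‖⁻¹ * ‖y‖⁻¹ * ‖x - y‖ ^ 2 := by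
      simpa only [zero_add, zero_sub, Real.rpow_one, Real.rpow_neg_one] using alphaD_sq 0 hx hy
    _ = (‖x - y‖ ^ 2 - (‖x‖ - ‖y‖) ^ 2) / (‖x‖ * ‖y‖) := by
      field_simp
      ring

end InnerProductSpace

theorem stmt_9 {X : Type*} [NormedAddCommGroup X] [InnerProductSpace ℝ X]
    (p : ℝ) (x y : X) (hx : x ≠ 0) (hy : y ≠ 0) :
    alphaD p x y =
      Real.sqrt ((‖x‖ ^ (p + 1) - ‖y‖ ^ (p + 1)) * (‖x‖ ^ (p - 1) - ‖y‖ ^ (p - 1)) +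
        ‖x‖ ^ (p - 1) * ‖y‖ ^ (p - 1) * ‖x - y‖ ^ 2) ∧
    alphaD 0 x y =
      Real.sqrt ((‖x - y‖ ^ 2 - (‖x‖ - ‖y‖) ^ 2) / (‖x‖ * ‖y‖)) := by
  constructor
  · rw [← alphaD_sq p hx hy, Real.sqrt_sq (alphaD_nonneg p x y)]
  · rw [← alphaD_zero_sq hx hy, Real.sqrt_sq (alphaD_nonneg 0 x y)]
end
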